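/- Let n, m, k be positive integers, X̂ ∈ ℝ^{n×m}, U ∈ ℝ^{m×k}, and V, Y ∈ (Δ_k)^{⊗n}. (i) For every probability vector p on [m] with positive entries, the partial-sampling estimate ξ_U(p) satisfies E[ ‖ξ_U(p)‖_{2×∞}² ] = Σ_{i=1}^m (1/p_i)·‖X̂(:,i)‖_2²·‖U(i,:)‖_∞², and if c_i := ‖X̂(:,i)‖_2·‖U(i,:)‖_∞ > 0 for all i, then this quantity is at least (Σ_{i=1}^m c_i)², with equality if and only if p = p* where p*_i = c_i / Σ_{ι} c_ι. (ii) Likewise, for every probability vector q on [n] with positive entries, E[ ‖η_{V,Y}(q)‖_{∞×∞}² ] = Σ_{j=1}^n (1/q_j)·‖X̂(j,:)‖_∞²·‖V(j,:) − Y(j,:)‖_∞², and if d_j := ‖X̂(j,:)‖_∞·‖V(j,:) − Y(j,:)‖_∞ > 0 for all j, then this quantity is at least (Σ_{j=1}^n d_j)², with equality if and only if q = q* where q*_j = d_j / Σ_{ȷ} d_ȷ. -/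

import Mathlib

open scoped ENNReal BigOperators
open Matrix

/-- The `ℓ_p` norm of a finitely-indexed real vector, `p ∈ [1,∞]`. -/
noncomputable def lpNorm {ι : Type*} [Fintype ι] (p : ℝ≥0∞) (v : ι → ℝ) : ℝ :=
  if p = ∞ then ⨆ i, |v i| else (∑ i, |v i| ^ p.toReal) ^ (1 / p.toReal)

/-- The mixed norm `‖A‖_{p×q}`. -/
noncomputable def mixedNorm {ι κ : Type*} [Fintype ι] [Fintype κ]
    (p q : ℝ≥0∞) (A : Matrix ι κ ℝ) : ℝ :=
  lpNorm p (fun i => lpNorm q (A i))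

/-- The partial-sampling primal estimate `ξ_U(p) = X̂ (e_i e_iᵀ / p_i) U`,
as a (deterministic) matrix-valued function of the drawn index `i`. -/
noncomputable def xiPart {n m k : ℕ} (Xh : Matrix (Fin n) (Fin m) ℝ)
    (U : Matrix (Fin m) (Fin k) ℝ) (p : Fin m → ℝ) (i : Fin m) :
    Matrix (Fin n) (Fin k) ℝ :=
  Matrix.of fun r c => Xh r i * U i c / p i

/-- The partial-sampling dual estimate `η_{V,Y}(q) = X̂ᵀ (e_j e_jᵀ / q_j)(V − Y)`,
as a (deterministic) matrix-valued function of the drawn index `j`. -/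
noncomputable def etaPart {n m k : ℕ} (Xh : Matrix (Fin n) (Fin m) ℝ)
    (V Y : Matrix (Fin n) (Fin k) ℝ) (q : Fin n → ℝ) (j : Fin n) :
    Matrix (Fin m) (Fin k) ℝ :=
  Matrix.of fun r c => Xh j r * (V j c - Y j c) / q j

/-!
A sampled matrix is a rescaled outer product `x uᵀ / pᵢ`, and the mixed norm of an outer product is
the product of the norms of its factors, so the second moment is `∑ᵢ cᵢ² / pᵢ`, where `cᵢ` is this
product. With `S = ∑ᵢ cᵢ` and `∑ᵢ pᵢ = 1`, completing the square gives
`∑ᵢ cᵢ² / pᵢ = S² + ∑ᵢ (cᵢ - S pᵢ)² / pᵢ`.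
The dual estimate is the primal estimate for the pair `(X̂ᵀ, V - Y)`.
-/

section MixedNorm

variable {ι κ : Type*} [Fintype ι] [Fintype κ]

theorem lpNorm_nonneg (P : ℝ≥0∞) (v : ι → ℝ) : 0 ≤ lpNorm P v := by
  unfold lpNorm
  split_ifs
  · exact Real.iSup_nonneg fun _ => abs_nonneg _
  · positivity

theorem lpNorm_abs (P : ℝ≥0∞) (v : ι → ℝ) : lpNorm P |v| = lpNorm P v := by
  simp [lpNorm]

theorem lpNorm_smul {P : ℝ≥0∞} (hP : P ≠ 0) (a : ℝ) (v : ι → ℝ) :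
    lpNorm P (a • v) = |a| * lpNorm P v := by
  simp only [lpNorm, Pi.smul_apply, smul_eq_mul, abs_mul]
  split_ifs with hP_top
  · exact (Real.mul_iSup_of_nonneg (abs_nonneg a) _).symm
  · have hP_real : P.toReal ≠ 0 := ENNReal.toReal_ne_zero.mpr ⟨hP, hP_top⟩
    simp only [Real.mul_rpow (abs_nonneg _) (abs_nonneg _), ← Finset.mul_sum]
    rw [Real.mul_rpow (by positivity) (by positivity), one_div,
      Real.rpow_rpow_inv (abs_nonneg a) hP_real]

theorem mixedNorm_vecMulVec {P Q : ℝ≥0∞} (hP : P ≠ 0) (hQ : Q ≠ 0) (x : ι → ℝ) (u : κ → ℝ) :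
    mixedNorm P Q (vecMulVec x u) = lpNorm P x * lpNorm Q u := by
  have row_norms : (fun r => lpNorm Q (vecMulVec x u r)) = lpNorm Q u • |x| := by
    funext r
    calc lpNorm Q (vecMulVec x u r) = |x r| * lpNorm Q u := lpNorm_smul hQ (x r) u
      _ = (lpNorm Q u • |x|) r := mul_comm _ _
  rw [mixedNorm, row_norms, lpNorm_smul hP, lpNorm_abs, abs_of_nonneg (lpNorm_nonneg Q u),
    mul_comm]

end MixedNorm

section SedrakyanEquality

variable {ι K : Type*} [Field K]

theorem sum_sub_mul_sq_div (s : Finset ι) (f : ι → K) {g : ι → K} (hg : ∀ i ∈ s, g i ≠ 0)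
    (a : K) :
    ∑ i ∈ s, (f i - a * g i) ^ 2 / g i =
      ∑ i ∈ s, f i ^ 2 / g i - 2 * a * ∑ i ∈ s, f i + a ^ 2 * ∑ i ∈ s, g i := by
  simp only [Finset.mul_sum, ← Finset.sum_sub_distrib, ← Finset.sum_add_distrib]
  refine Finset.sum_congr rfl fun i hi => ?_
  have := hg i hi
  field_simp
  ring

theorem sum_sq_div_eq_sq_sum_div_iff [LinearOrder K] [IsStrictOrderedRing K] (s : Finset ι)
    (f : ι → K) {g : ι → K} (hg : ∀ i ∈ s, 0 < g i) :
    ∑ i ∈ s, f i ^ 2 / g i = (∑ i ∈ s, f i) ^ 2 / ∑ i ∈ s, g i ↔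
      ∀ i ∈ s, f i = (∑ j ∈ s, f j) / (∑ j ∈ s, g j) * g i := by
  obtain rfl | hs := s.eq_empty_or_nonempty
  · simp
  set F := ∑ i ∈ s, f i
  set G := ∑ i ∈ s, g i
  have hG : G ≠ 0 := (Finset.sum_pos hg hs).ne'
  have defect : ∑ i ∈ s, (f i - F / G * g i) ^ 2 / g i = ∑ i ∈ s, f i ^ 2 / g i - F ^ 2 / G := by
    rw [sum_sub_mul_sq_div s f (fun i hi => (hg i hi).ne')]
    field_simp
    ring
  have defect_nonneg : ∀ i ∈ s, 0 ≤ (f i - F / G * g i) ^ 2 / g i := fun i hi =>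
    div_nonneg (sq_nonneg _) (hg i hi).le
  rw [← sub_eq_zero, ← defect, Finset.sum_eq_zero_iff_of_nonneg defect_nonneg]
  refine forall₂_congr fun i hi => ?_
  rw [div_eq_zero_iff, or_iff_left (hg i hi).ne', sq_eq_zero_iff, sub_eq_zero]

end SedrakyanEquality

section PartialSampling

variable {n m k : ℕ} {P Q : ℝ≥0∞}

theorem xiPart_eq_vecMulVec (X : Matrix (Fin n) (Fin m) ℝ) (U : Matrix (Fin m) (Fin k) ℝ)
    (p : Fin m → ℝ) (i : Fin m) :
    xiPart X U p i = vecMulVec ((p i)⁻¹ • fun r => X r i) (U i) := by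
  ext r c
  simp only [xiPart, of_apply, vecMulVec_apply, Pi.smul_apply, smul_eq_mul]
  ring

theorem etaPart_eq_xiPart_transpose (X : Matrix (Fin n) (Fin m) ℝ) (V Y : Matrix (Fin n) (Fin k) ℝ)
    (q : Fin n → ℝ) : etaPart X V Y q = xiPart Xᵀ (V - Y) q :=
  rfl

theorem mul_mixedNorm_xiPart_sq (hP : P ≠ 0) (hQ : Q ≠ 0) (X : Matrix (Fin n) (Fin m) ℝ)
    (U : Matrix (Fin m) (Fin k) ℝ) (p : Fin m → ℝ) (i : Fin m) :
    p i * mixedNorm P Q (xiPart X U p i) ^ 2 =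
      (lpNorm P (fun r => X r i) * lpNorm Q (U i)) ^ 2 / p i := by
  rw [xiPart_eq_vecMulVec, mixedNorm_vecMulVec hP hQ, lpNorm_smul hP, mul_assoc, mul_pow, sq_abs]
  field

theorem partial_sampling_second_moment_optimal_distributions_general
    (hP : P ≠ 0) (hQ : Q ≠ 0) (X : Matrix (Fin n) (Fin m) ℝ) (U : Matrix (Fin m) (Fin k) ℝ)
    {p : Fin m → ℝ} (hp : ∀ i, 0 < p i) (hp_sum : ∑ i, p i = 1) :
    (∑ i, p i * mixedNorm P Q (xiPart X U p i) ^ 2 =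
      ∑ i, 1 / p i * lpNorm P (fun r => X r i) ^ 2 * lpNorm Q (U i) ^ 2) ∧
    (∑ i, lpNorm P (fun r => X r i) * lpNorm Q (U i)) ^ 2 ≤
      ∑ i, p i * mixedNorm P Q (xiPart X U p i) ^ 2 ∧
    (∑ i, lpNorm P (fun r => X r i) * lpNorm Q (U i) ≠ 0 →
      (∑ i, p i * mixedNorm P Q (xiPart X U p i) ^ 2 =
          (∑ i, lpNorm P (fun r => X r i) * lpNorm Q (U i)) ^ 2 ↔
        ∀ i, p i = lpNorm P (fun r => X r i) * lpNorm Q (U i) /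
          ∑ i', lpNorm P (fun r => X r i') * lpNorm Q (U i'))) := by
  simp only [mul_mixedNorm_xiPart_sq hP hQ]
  set c : Fin m → ℝ := fun i => lpNorm P (fun r => X r i) * lpNorm Q (U i)
  refine ⟨Finset.sum_congr rfl fun i _ => by ring, ?_, fun hc => ?_⟩
  · simpa only [hp_sum, div_one] using
      Finset.univ.sq_sum_div_le_sum_sq_div c fun i _ => hp i
  · have eq_iff := sum_sq_div_eq_sq_sum_div_iff Finset.univ c fun i _ => hp i
    simp only [hp_sum, div_one, Finset.mem_univ, forall_const] at eq_iff
    exact eq_iff.trans (forall_congr' fun i => by rw [eq_div_iff hc, mul_comm (p i), eq_comm])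

end PartialSampling

/-- Second moments of the partial-sampling estimates in the `2×∞` (resp. `∞×∞`)
mixed norms, and optimality of the sampling distributions `p*`, `q*`. -/
theorem partial_sampling_second_moment_optimal_distributions
    (n m k : ℕ) (hn : 0 < n) (hm : 0 < m) (hk : 0 < k)
    (Xh : Matrix (Fin n) (Fin m) ℝ)
    (U : Matrix (Fin m) (Fin k) ℝ)
    (V Y : Matrix (Fin n) (Fin k) ℝ)
    (hV : ∀ j, V j ∈ stdSimplex ℝ (Fin k)) (hY : ∀ j, Y j ∈ stdSimplex ℝ (Fin k)) :
    -- (i) primal estimate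
    (∀ p : Fin m → ℝ, (∀ i, 0 < p i) → (∑ i, p i) = 1 →
      ((∑ i, p i * (mixedNorm 2 ∞ (xiPart Xh U p i)) ^ 2)
          = ∑ i, (1 / p i) * (lpNorm 2 (fun r => Xh r i)) ^ 2 * (lpNorm ∞ (U i)) ^ 2) ∧
      ((∀ i, 0 < lpNorm 2 (fun r => Xh r i) * lpNorm ∞ (U i)) →
        ((∑ i, lpNorm 2 (fun r => Xh r i) * lpNorm ∞ (U i)) ^ 2
            ≤ ∑ i, p i * (mixedNorm 2 ∞ (xiPart Xh U p i)) ^ 2 ∧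
         ((∑ i, p i * (mixedNorm 2 ∞ (xiPart Xh U p i)) ^ 2
              = (∑ i, lpNorm 2 (fun r => Xh r i) * lpNorm ∞ (U i)) ^ 2)
            ↔ (∀ i, p i = lpNorm 2 (fun r => Xh r i) * lpNorm ∞ (U i) /
                  ∑ i', lpNorm 2 (fun r => Xh r i') * lpNorm ∞ (U i')))))) ∧
    -- (ii) dual estimate
    (∀ q : Fin n → ℝ, (∀ j, 0 < q j) → (∑ j, q j) = 1 →
      ((∑ j, q j * (mixedNorm ∞ ∞ (etaPart Xh V Y q j)) ^ 2)
          = ∑ j, (1 / q j) * (lpNorm ∞ (Xh j)) ^ 2 * (lpNorm ∞ (fun l => V j l - Y j l)) ^ 2) ∧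
      ((∀ j, 0 < lpNorm ∞ (Xh j) * lpNorm ∞ (fun l => V j l - Y j l)) →
        ((∑ j, lpNorm ∞ (Xh j) * lpNorm ∞ (fun l => V j l - Y j l)) ^ 2
            ≤ ∑ j, q j * (mixedNorm ∞ ∞ (etaPart Xh V Y q j)) ^ 2 ∧
         ((∑ j, q j * (mixedNorm ∞ ∞ (etaPart Xh V Y q j)) ^ 2
              = (∑ j, lpNorm ∞ (Xh j) * lpNorm ∞ (fun l => V j l - Y j l)) ^ 2)
            ↔ (∀ j, q j = lpNorm ∞ (Xh j) * lpNorm ∞ (fun l => V j l - Y j l) /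
                  ∑ j', lpNorm ∞ (Xh j') * lpNorm ∞ (fun l => V j' l - Y j' l)))))) := by
  refine ⟨fun p hp hp_sum => ?_, fun q hq hq_sum => ?_⟩
  · obtain ⟨moment, bound, eq_iff⟩ :=
      partial_sampling_second_moment_optimal_distributions_general two_ne_zero ENNReal.top_ne_zero
        Xh U hp hp_sum
    refine ⟨moment, fun hc => ⟨bound, eq_iff (ne_of_gt ?_)⟩⟩
    exact Finset.sum_pos (fun i _ => hc i) ⟨⟨0, hm⟩, Finset.mem_univ _⟩
  · obtain ⟨moment, bound, eq_iff⟩ :=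
      partial_sampling_second_moment_optimal_distributions_general ENNReal.top_ne_zero
        ENNReal.top_ne_zero Xhᵀ (V - Y) hq hq_sum
    rw [← etaPart_eq_xiPart_transpose] at moment bound eq_iff
    refine ⟨moment, fun hd => ⟨bound, eq_iff (ne_of_gt ?_)⟩⟩
    exact Finset.sum_pos (fun j _ => hd j) ⟨⟨0, hn⟩, Finset.mem_univ _⟩
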